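/- Let C be a small category and Λ a class of morphisms satisfying: every isomorphism belongs to Λ; pullbacks of Λ-morphisms along arbitrary morphisms exist and belong to Λ; Λ is closed under composition (so in particular every λ ∈ Λ has a kernel pair). Let J_Λ be the single Λ-topology. Then any filtered colimit of J_Λ-sheaves, computed in the presheaf category Fun(Cᵒᵖ, Set), is again a J_Λ-sheaf: if I is filtered and D : I → Fun(Cᵒᵖ, Set) is a diagram all of whose values are J_Λ-sheaves, then colim_i D(i) is a J_Λ-sheaf. -/

import Mathlib

open CategoryTheory CategoryTheory.Limits Opposite

universe u

/-!
The topology has a basis of covers generated by a single morphism `l` of `Λ`, and these generated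
sieves are stable under pullback; hence a presheaf is a sheaf for `J` as soon as it is a sheaf for
every singleton `{l}` (`isSheaf_of_forall_singleton`). Since `l` has a kernel pair `t, p`, the
condition for `{l}` says that `F(X) → F(A) ⇉ F(P)` is an equalizer. This is a finite limit in sets,
so it is preserved by filtered colimits: a section of the colimit, and the single equation
expressing its compatibility, are already defined at one stage of the diagram, where they can be
glued (`isSheafFor_singleton_colimit`).
-/

section

variable {C : Type u} [SmallCategory C]

/-- The sieve generated by a pullback of `l` along `f` is the pulled back sieve. -/
lemma pullback_generate_singleton {A X B P : C} {l : A ⟶ X} {f : B ⟶ X} {t : P ⟶ A} {p : P ⟶ B}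
    (h : IsPullback t p l f) :
    (Sieve.generate (Presieve.singleton l)).pullback f =
      Sieve.generate (Presieve.singleton p) := by
  ext Z g
  constructor
  · rintro ⟨_, a, _, ⟨⟩, ha⟩
    exact ⟨P, h.lift a g ha, p, ⟨⟩, h.lift_snd _ _ _⟩
  · rintro ⟨_, a, _, ⟨⟩, rfl⟩
    exact ⟨A, a ≫ t, l, ⟨⟩, by simp [h.w]⟩

lemma isSheaf_of_forall_singleton (Lam : MorphismProperty C)
    (hpb : ∀ {A X B : C} (l : A ⟶ X) (f : B ⟶ X), Lam l →
      ∃ (P : C) (t : P ⟶ A) (p : P ⟶ B), IsPullback t p l f ∧ Lam p)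
    (J : GrothendieckTopology C)
    (hJ : ∀ (X : C) (S : Sieve X), S ∈ J X → ∃ (A : C) (l : A ⟶ X), Lam l ∧ S.arrows l)
    (F : Cᵒᵖ ⥤ Type u)
    (hF : ∀ {A X : C} (l : A ⟶ X), Lam l → Presieve.IsSheafFor F (Presieve.singleton l)) :
    Presieve.IsSheaf J F := by
  intro X S hS
  obtain ⟨A, l, hl, hSl⟩ := hJ X S hS
  refine Presieve.isSheafFor_subsieve F (S := Sieve.generate (Presieve.singleton l)) ?_ ?_
  · refine (Sieve.generate_le_iff _ _).2 ?_
    rintro _ _ ⟨⟩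
    exact hSl
  · intro Y f
    obtain ⟨P, t, p, h, hp⟩ := hpb l f hl
    rw [pullback_generate_singleton h, ← Presieve.isSheafFor_iff_generate]
    exact hF p hp

variable {I : Type u} [SmallCategory I] (D : I ⥤ Cᵒᵖ ⥤ Type u)

lemma exists_colimit_ι_app_eq (X : Cᵒᵖ) (x : (colimit D).obj X) :
    ∃ (i : I) (y : (D.obj i).obj X), (colimit.ι D i).app X y = x :=
  Types.jointly_surjective_of_isColimit
    (isColimitOfPreserves ((evaluation _ _).obj X) (colimit.isColimit D)) x

lemma colimit_ι_app_map {i j : I} (f : i ⟶ j) (X : Cᵒᵖ) (x : (D.obj i).obj X) :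
    (colimit.ι D j).app X ((D.map f).app X x) = (colimit.ι D i).app X x := by
  rw [← colimit.w D f]
  rfl

variable [IsFiltered I]

lemma colimit_ι_app_eq_iff {i : I} (X : Cᵒᵖ) (x y : (D.obj i).obj X) :
    (colimit.ι D i).app X x = (colimit.ι D i).app X y ↔
      ∃ (j : I) (f : i ⟶ j), (D.map f).app X x = (D.map f).app X y :=
  Types.FilteredColimit.isColimit_eq_iff'
    (isColimitOfPreserves ((evaluation _ _).obj X) (colimit.isColimit D)) x y

lemma exists_colimit_ι_app_eq₂ (X : Cᵒᵖ) (x y : (colimit D).obj X) :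
    ∃ (i : I) (x' y' : (D.obj i).obj X),
      (colimit.ι D i).app X x' = x ∧ (colimit.ι D i).app X y' = y :=
  Types.FilteredColimit.jointly_surjective_of_isColimit₂
    (isColimitOfPreserves ((evaluation _ _).obj X) (colimit.isColimit D)) x y

/-- A filtered colimit of presheaves satisfying the sheaf condition for `{l}` satisfies it again,
provided that `l` has a kernel pair. -/
lemma isSheafFor_singleton_colimit {A X P : C} {l : A ⟶ X} {t p : P ⟶ A}
    (h : IsPullback t p l l)
    (hD : ∀ i, Presieve.IsSheafFor (D.obj i) (Presieve.singleton l)) :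
    Presieve.IsSheafFor (colimit D) (Presieve.singleton l) := by
  rw [Presieve.isSheafFor_singleton]
  intro x hx
  refine existsUnique_of_exists_of_unique ?_ ?_
  · obtain ⟨i, y, rfl⟩ := exists_colimit_ι_app_eq D _ x
    have hy := hx t p h.w
    rw [← NatTrans.naturality_apply, ← NatTrans.naturality_apply, colimit_ι_app_eq_iff] at hy
    obtain ⟨j, f, hf⟩ := hy
    rw [NatTrans.naturality_apply, NatTrans.naturality_apply] at hf
    obtain ⟨z, hz, -⟩ := Presieve.isSheafFor_singleton.1 (hD j) ((D.map f).app _ y) (by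
      intro Z p₁ p₂ hp
      rw [← h.lift_fst p₁ p₂ hp]
      -- `P` is universal among pairs equalized by `l`, so compatibility on `P` suffices
      conv_rhs => rw [← h.lift_snd p₁ p₂ hp]
      simp only [op_comp, Functor.map_comp, comp_apply, hf])
    refine ⟨(colimit.ι D j).app _ z, ?_⟩
    rw [← NatTrans.naturality_apply, hz, colimit_ι_app_map]
  · intro z₁ z₂ h₁ h₂
    obtain ⟨i, a, b, rfl, rfl⟩ := exists_colimit_ι_app_eq₂ D _ z₁ z₂
    have hab := h₁.trans h₂.symm
    rw [← NatTrans.naturality_apply, ← NatTrans.naturality_apply, colimit_ι_app_eq_iff] at hab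
    obtain ⟨j, f, hf⟩ := hab
    rw [NatTrans.naturality_apply, NatTrans.naturality_apply] at hf
    rw [colimit_ι_app_eq_iff]
    exact ⟨j, f, Presieve.isSeparatedFor_singleton.1 (hD j).isSeparatedFor hf⟩

end

/-- For the single `Λ`-topology `J` on `C` (where `Λ`-morphisms admit
pullbacks, in particular kernel pairs), any filtered colimit of `J`-sheaves of sets,
computed in the presheaf category, is again a `J`-sheaf. -/
theorem filtered_colimit_isSheaf {C : Type u} [SmallCategory C] (Lam : MorphismProperty C)
    (hiso : ∀ {X Y : C} (f : X ⟶ Y), IsIso f → Lam f)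
    (hpb : ∀ {A X B : C} (l : A ⟶ X) (f : B ⟶ X), Lam l →
      ∃ (P : C) (t : P ⟶ A) (p : P ⟶ B), IsPullback t p l f ∧ Lam p)
    (hcomp : ∀ {X Y Z : C} (f : X ⟶ Y) (g : Y ⟶ Z), Lam f → Lam g → Lam (f ≫ g))
    (J : GrothendieckTopology C)
    (hJ : ∀ (X : C) (S : Sieve X), S ∈ J X ↔ ∃ (A : C) (l : A ⟶ X), Lam l ∧ S.arrows l)
    {I : Type u} [SmallCategory I] [IsFiltered I]
    (D : I ⥤ Cᵒᵖ ⥤ Type u)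
    (hsheaf : ∀ i : I, Presieve.IsSheaf J (D.obj i)) :
    Presieve.IsSheaf J (colimit D) := by
  refine isSheaf_of_forall_singleton Lam hpb J (fun X S => (hJ X S).1) _ fun {A X} l hl => ?_
  obtain ⟨P, t, p, h, -⟩ := hpb l l hl
  refine isSheafFor_singleton_colimit D h fun i => ?_
  rw [Presieve.isSheafFor_iff_generate]
  exact hsheaf i _ ((hJ X _).2 ⟨A, l, hl, Sieve.le_generate _ _ _ ⟨⟩⟩)
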